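/- Let J ∈ M_n(ℂ) be a fundamental symmetry. A linear map Ψ : M_n(ℂ) → M_n(ℂ) is completely J-positive if and only if it is a Kraus J-map, i.e., there exist ν ∈ ℕ and matrices V₁, …, V_ν ∈ M_n(ℂ) such that Ψ(A) = Σ_{i=1}^{ν} V_i^♮ A V_i for all A ∈ M_n(ℂ). -/

import Mathlib

/-!
Multiplication by `𝒥_k` on the left turns complete `J`-positivity of `Ψ` into complete positivity
of `A ↦ J Ψ(J A)`, so the theorem is a `J`-twisted form of Choi's theorem.

If `Ψ(A) = ∑ V_i^♮ A V_i`, then `J · J V_iᴴ J = V_iᴴ J` gives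
`𝒥_k Ψ^k(C) = ∑ (V_i ⊗ 1)ᴴ (𝒥_k C) (V_i ⊗ 1)`, a sum of congruences of a positive semidefinite
matrix (`Jblock_mul_blockMap_of_kraus`).

Conversely, let `Ω = ω ωᴴ` be the matrix whose `(a, b)` block is the matrix unit `E_{ab}`, and apply
the hypothesis with `k = n` to `𝒥_n Ω`. The twisted Choi matrix, with entries
`(J Ψ(J E_{ab}))_{ij}`, is thus positive semidefinite, hence of the form `Bᴴ B`. Each row of `B`,
reshaped into an `n × n` matrix, is one of the `V_p`, and expanding `A` in matrix units gives
`J Ψ(J A) = ∑ V_pᴴ A V_p`; replace `A` by `J A` and multiply by `J`.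
-/

open Matrix
open scoped ComplexOrder

/-- A fundamental symmetry: `Jᴴ = J` and `J² = 1`. -/
def IsFundamentalSymmetry {n : ℕ} (J : Matrix (Fin n) (Fin n) ℂ) : Prop :=
  Jᴴ = J ∧ J * J = 1

/-- The `J`-adjoint `M^♮ = J Mᴴ J`. -/
noncomputable def jAdj {n : ℕ} (J M : Matrix (Fin n) (Fin n) ℂ) : Matrix (Fin n) (Fin n) ℂ :=
  J * Mᴴ * J

/-- The `k`-th block map `Φ^k` acting on `k × k` block matrices with `n × n` blocks:
`Φ` is applied to each block. Block `(a, b)` of `C` is the matrix `(i, j) ↦ C (i, a) (j, b)`. -/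
def blockMap {n : ℕ} (Φ : Matrix (Fin n) (Fin n) ℂ → Matrix (Fin n) (Fin n) ℂ) (k : ℕ)
    (C : Matrix (Fin n × Fin k) (Fin n × Fin k) ℂ) :
    Matrix (Fin n × Fin k) (Fin n × Fin k) ℂ :=
  Matrix.of fun p q => Φ (Matrix.of fun i j => C (i, p.2) (j, q.2)) p.1 q.1

/-- The block-diagonal fundamental symmetry `𝒥_k` with `k` diagonal copies of `J`. -/
def Jblock {n : ℕ} (J : Matrix (Fin n) (Fin n) ℂ) (k : ℕ) :
    Matrix (Fin n × Fin k) (Fin n × Fin k) ℂ :=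
  Matrix.blockDiagonal fun _ : Fin k => J

/-- `Φ` is completely positive: every block map `Φ^k` preserves positive semidefiniteness. -/
def CompletelyPositive {n : ℕ}
    (Φ : Matrix (Fin n) (Fin n) ℂ → Matrix (Fin n) (Fin n) ℂ) : Prop :=
  ∀ (k : ℕ) (C : Matrix (Fin n × Fin k) (Fin n × Fin k) ℂ),
    C.PosSemidef → (blockMap Φ k C).PosSemidef

/-- `Ψ` is completely `J`-positive: every block map `Ψ^k` maps `𝒥_k`-positive matrices
to `𝒥_k`-positive matrices. -/
def CompletelyJPositive {n : ℕ} (J : Matrix (Fin n) (Fin n) ℂ)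
    (Ψ : Matrix (Fin n) (Fin n) ℂ → Matrix (Fin n) (Fin n) ℂ) : Prop :=
  ∀ (k : ℕ) (C : Matrix (Fin n × Fin k) (Fin n × Fin k) ℂ),
    (Jblock J k * C).PosSemidef → (Jblock J k * blockMap Ψ k C).PosSemidef

lemma Jblock_mul_apply {n k : ℕ} (M : Matrix (Fin n) (Fin n) ℂ)
    (X : Matrix (Fin n × Fin k) (Fin n × Fin k) ℂ) (p q : Fin n × Fin k) :
    (Jblock M k * X) p q = (M * Matrix.of fun i j => X (i, p.2) (j, q.2)) p.1 q.1 := by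
  simp [Jblock, Matrix.mul_apply, Matrix.blockDiagonal_apply, Fintype.sum_prod_type]

lemma mul_Jblock_apply {n k : ℕ} (M : Matrix (Fin n) (Fin n) ℂ)
    (X : Matrix (Fin n × Fin k) (Fin n × Fin k) ℂ) (p q : Fin n × Fin k) :
    (X * Jblock M k) p q = ((Matrix.of fun i j => X (i, p.2) (j, q.2)) * M) p.1 q.1 := by
  simp [Jblock, Matrix.mul_apply, Matrix.blockDiagonal_apply, Fintype.sum_prod_type]

lemma Jblock_conjTranspose {n : ℕ} (M : Matrix (Fin n) (Fin n) ℂ) (k : ℕ) :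
    (Jblock M k)ᴴ = Jblock Mᴴ k :=
  Matrix.blockDiagonal_conjTranspose _

/-- `Jblock V k` plays the role of `V ⊗ 1`: for a Kraus `J`-map, `𝒥_k Ψ^k(C)` is a sum of
congruences of `𝒥_k C`. -/
lemma Jblock_mul_blockMap_of_kraus {n : ℕ} {J : Matrix (Fin n) (Fin n) ℂ}
    (hJ : IsFundamentalSymmetry J) {Ψ : Matrix (Fin n) (Fin n) ℂ → Matrix (Fin n) (Fin n) ℂ}
    {ν : ℕ} {V : Fin ν → Matrix (Fin n) (Fin n) ℂ} (hV : ∀ A, Ψ A = ∑ i, jAdj J (V i) * A * V i)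
    (k : ℕ) (C : Matrix (Fin n × Fin k) (Fin n × Fin k) ℂ) :
    Jblock J k * blockMap Ψ k C =
      ∑ i, (Jblock (V i) k)ᴴ * (Jblock J k * C) * Jblock (V i) k := by
  ext p q
  have key : ∀ A, J * Ψ A = ∑ i, (V i)ᴴ * (J * A) * V i := fun A => by
    rw [hV, Finset.mul_sum]
    refine Finset.sum_congr rfl fun i _ => ?_
    simp only [jAdj, ← Matrix.mul_assoc, hJ.2, Matrix.one_mul]
  have h1 : (Jblock J k * blockMap Ψ k C) p q =
      (J * Ψ (Matrix.of fun i j => C (i, p.2) (j, q.2))) p.1 q.1 := Jblock_mul_apply _ _ _ _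
  rw [h1, key, Matrix.sum_apply, Matrix.sum_apply]
  refine Finset.sum_congr rfl fun i _ => ?_
  rw [mul_Jblock_apply, Jblock_conjTranspose]
  refine congrFun (congrFun (congrArg (· * V i) ?_) p.1) q.1
  ext a b
  rw [Matrix.of_apply, Jblock_mul_apply]
  refine congrFun (congrFun (congrArg ((V i)ᴴ * ·) ?_) a) b
  ext c d
  rw [Matrix.of_apply, Jblock_mul_apply]

/-- The matrix with entries `(J Ψ(J E_{ab}))_{ij}` at `((i, a), (j, b))`, i.e. the Choi matrix of
`A ↦ J Ψ(J A)`. -/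
noncomputable def twistedChoi {n : ℕ} (J : Matrix (Fin n) (Fin n) ℂ)
    (Ψ : Matrix (Fin n) (Fin n) ℂ → Matrix (Fin n) (Fin n) ℂ) :
    Matrix (Fin n × Fin n) (Fin n × Fin n) ℂ :=
  Matrix.of fun p q => (J * Ψ (J * Matrix.single p.2 q.2 1)) p.1 q.1

lemma twistedChoi_posSemidef {n : ℕ} {J : Matrix (Fin n) (Fin n) ℂ}
    (hJ : IsFundamentalSymmetry J) {Ψ : Matrix (Fin n) (Fin n) ℂ → Matrix (Fin n) (Fin n) ℂ}
    (h : CompletelyJPositive J Ψ) : (twistedChoi J Ψ).PosSemidef := by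
  -- `ω = ∑ e_i ⊗ e_i`; block `(a, b)` of `ω ωᴴ` is the matrix unit `E_{ab}`.
  let ω : Fin n × Fin n → ℂ := fun p => if p.2 = p.1 then 1 else 0
  let Ω := Matrix.vecMulVec ω (star ω)
  have hΩ : Ω.PosSemidef := Matrix.posSemidef_vecMulVec_self_star ω
  have hJJ : Jblock J n * Jblock J n = 1 := by
    rw [Jblock, ← Matrix.blockDiagonal_mul]
    simp only [hJ.2]
    exact Matrix.blockDiagonal_one
  have h2 := h n (Jblock J n * Ω) (by rwa [← Matrix.mul_assoc, hJJ, Matrix.one_mul])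
  convert h2 using 1
  ext p q
  have h1 : (Jblock J n * blockMap Ψ n (Jblock J n * Ω)) p q =
      (J * Ψ (Matrix.of fun i j => (Jblock J n * Ω) (i, p.2) (j, q.2))) p.1 q.1 :=
    Jblock_mul_apply _ _ _ _
  rw [h1, twistedChoi, Matrix.of_apply]
  refine congrFun (congrFun (congrArg (fun X => J * Ψ X) ?_) p.1) q.1
  ext i j
  rw [Matrix.of_apply, Jblock_mul_apply]
  refine congrFun (congrFun (congrArg (J * ·) ?_) i) j
  ext c d
  by_cases hc : p.2 = c <;> by_cases hd : q.2 = d <;>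
    simp [Ω, ω, Matrix.vecMulVec_apply, hc, hd]

open scoped MatrixOrder Matrix.Norms.L2Operator in
lemma exists_eq_conjTranspose_mul_self {m : Type*} [Fintype m] [DecidableEq m] {M : Matrix m m ℂ}
    (hM : M.PosSemidef) : ∃ B : Matrix m m ℂ, M = Bᴴ * B :=
  CStarAlgebra.nonneg_iff_eq_star_mul_self.mp hM.nonneg

/-- A linear map is completely `J`-positive iff it is a Kraus `J`-map. -/
theorem completelyJPositive_iff_kraus_jmap {n : ℕ}
    (J : Matrix (Fin n) (Fin n) ℂ) (hJ : IsFundamentalSymmetry J)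
    (Ψ : Matrix (Fin n) (Fin n) ℂ →ₗ[ℂ] Matrix (Fin n) (Fin n) ℂ) :
    CompletelyJPositive J (⇑Ψ) ↔
      ∃ (ν : ℕ) (V : Fin ν → Matrix (Fin n) (Fin n) ℂ),
        ∀ A : Matrix (Fin n) (Fin n) ℂ, Ψ A = ∑ i, jAdj J (V i) * A * V i := by
  constructor
  · intro h
    obtain ⟨B, hB⟩ := exists_eq_conjTranspose_mul_self (twistedChoi_posSemidef hJ h)
    -- Row `p` of `B`, reshaped into an `n × n` matrix.
    let W : Fin n × Fin n → Matrix (Fin n) (Fin n) ℂ := fun p => Matrix.of fun a i => B p (i, a)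
    have hW : ∀ A, J * Ψ (J * A) = ∑ p, (W p)ᴴ * A * W p := by
      let L : Matrix (Fin n) (Fin n) ℂ →ₗ[ℂ] Matrix (Fin n) (Fin n) ℂ :=
        LinearMap.mulLeft ℂ J ∘ₗ Ψ ∘ₗ LinearMap.mulLeft ℂ J
      let R : Matrix (Fin n) (Fin n) ℂ →ₗ[ℂ] Matrix (Fin n) (Fin n) ℂ :=
        ∑ p, LinearMap.mulRight ℂ (W p) ∘ₗ LinearMap.mulLeft ℂ (W p)ᴴ
      suffices hLR : L = R by
        intro A
        simpa [L, R] using LinearMap.congr_fun hLR A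
      refine Matrix.ext_linearMap ℂ fun a b => LinearMap.ext_ring ?_
      ext i j
      have e := congrFun (congrFun hB (i, a)) (j, b)
      simp only [twistedChoi, Matrix.of_apply] at e
      simp [L, R, e, Matrix.mul_apply (M := Bᴴ), Matrix.sum_apply, W, Matrix.mul_apply,
        Matrix.single_apply, ite_and]
    refine ⟨n * n, fun i => W (finProdFinEquiv.symm i), fun A => ?_⟩
    rw [Equiv.sum_comp finProdFinEquiv.symm (fun p => jAdj J (W p) * A * W p)]
    have := congrArg (J * ·) (hW (J * A))
    simp only [← Matrix.mul_assoc, hJ.2, Matrix.one_mul, Finset.mul_sum] at this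
    simpa only [jAdj, ← Matrix.mul_assoc] using this
  · rintro ⟨ν, V, hV⟩ k C hC
    rw [Jblock_mul_blockMap_of_kraus hJ hV]
    exact Matrix.posSemidef_sum _ fun i _ => hC.conjTranspose_mul_mul_same _
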